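/- Let E be a finite-dimensional real inner product space and C₁, …, C_m ⊆ E compact convex sets each containing 0 in its interior, with gauges G_i = gauge C_i. For each i let P_i : (0,∞) × E → E be the map such that P_i(θ, y) is the (unique) minimizer of z ↦ (1/2)‖z − y‖² + θ·G_i(z). Then there exists a constant L > 0 such that for all θ, θ' ∈ (0,∞)^m and all y ∈ E, ‖ P₁(θ₁, P₂(θ₂, …, P_m(θ_m, y)…)) − P₁(θ'₁, P₂(θ'₂, …, P_m(θ'_m, y)…)) ‖ ≤ √m · L · ‖θ − θ'‖, where ‖θ − θ'‖ is the Euclidean norm on ℝ^m. -/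

import Mathlib

noncomputable section

/-- Composition `P₁(θ₁, P₂(θ₂, …, P_m(θ_m, y)…))` of a family of parametrized maps. -/
def composeProx {E : Type*} {m : ℕ} (Pr : Fin m → ℝ → E → E) (θ : Fin m → ℝ) : E → E :=
  (List.ofFn fun i => Pr i (θ i)).foldr (· ∘ ·) id

/-!
The optimality condition of `p = Prox_f(y)` is `y - p ∈ ∂f(p)`. Adding the subgradient inequalities
of `p = Prox_f(y)` at `q` and of `q = Prox_g(x)` at `p` gives
`‖p - q‖² ≤ ⟪y - x, p - q⟫ + (f - g)(q) - (f - g)(p)`, so `‖p - q‖ ≤ ‖y - x‖ + K` as soon as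
`f - g` is `K`-Lipschitz. A gauge `G` of a convex neighbourhood of `0` is Lipschitz, hence
`θ G - θ' G` is `K |θ - θ'|`-Lipschitz: each layer of the composition passes on the error of its
input unamplified and adds at most `K |θᵢ - θ'ᵢ|`. Cauchy–Schwarz bounds the accumulated error.
-/

section Prox

open Filter Set
open scoped NNReal RealInnerProductSpace Topology

variable {E : Type*} [NormedAddCommGroup E]

/-- `p` is a proximal point of `f` at `y`, that is, `p = Prox_f(y)`. It is a relation rather than a
function so that no existence or uniqueness of the minimizer is presupposed. -/
def IsProx (f : E → ℝ) (y p : E) : Prop :=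
  IsMinOn (fun z => (1 / 2) * ‖z - y‖ ^ 2 + f z) univ p

variable [InnerProductSpace ℝ E]

namespace IsProx

variable {f g : E → ℝ} {x y p q : E}

theorem inner_le_sub_add_mul (hp : IsProx f y p) (hf : ConvexOn ℝ univ f) (z : E) {t : ℝ}
    (ht : t ∈ Ioc (0 : ℝ) 1) :
    ⟪y - p, z - p⟫ ≤ f z - f p + t * ((1 / 2) * ‖z - p‖ ^ 2) := by
  obtain ⟨ht0, ht1⟩ := ht
  have hmin := isMinOn_univ_iff.1 hp ((1 - t) • p + t • z)
  have hconv : f ((1 - t) • p + t • z) ≤ (1 - t) * f p + t * f z :=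
    hf.2 (mem_univ p) (mem_univ z) (sub_nonneg.2 ht1) ht0.le (sub_add_cancel 1 t)
  have hdist : ‖(1 - t) • p + t • z - y‖ ^ 2 =
      ‖p - y‖ ^ 2 - 2 * (t * ⟪y - p, z - p⟫) + t ^ 2 * ‖z - p‖ ^ 2 := by
    have hseg : (1 - t) • p + t • z - y = (p - y) + t • (z - p) := by module
    rw [hseg, norm_add_sq_real, inner_smul_right, norm_smul, mul_pow, Real.norm_eq_abs, sq_abs,
      ← neg_sub y p, inner_neg_left, norm_neg]
    ring
  refine le_of_mul_le_mul_left ?_ ht0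
  linear_combination hmin + hconv + (1 / 2) * hdist

theorem inner_le_sub (hp : IsProx f y p) (hf : ConvexOn ℝ univ f) (z : E) :
    ⟪y - p, z - p⟫ ≤ f z - f p := by
  have hlim : Tendsto (fun t : ℝ => f z - f p + t * ((1 / 2) * ‖z - p‖ ^ 2)) (𝓝[>] 0)
      (𝓝 (f z - f p + 0 * ((1 / 2) * ‖z - p‖ ^ 2))) :=
    Continuous.continuousWithinAt (by fun_prop)
  rw [zero_mul, add_zero] at hlim
  refine ge_of_tendsto hlim ?_
  filter_upwards [Ioc_mem_nhdsGT one_pos] with t ht using hp.inner_le_sub_add_mul hf z ht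

theorem norm_sub_sq_le (hp : IsProx f y p) (hq : IsProx g x q) (hf : ConvexOn ℝ univ f)
    (hg : ConvexOn ℝ univ g) :
    ‖p - q‖ ^ 2 ≤ ⟪y - x, p - q⟫ + ((f - g) q - (f - g) p) := by
  have hsum : ‖p - q‖ ^ 2 = ⟪y - x, p - q⟫ + (⟪y - p, q - p⟫ + ⟪x - q, p - q⟫) := by
    rw [← real_inner_self_eq_norm_sq, ← neg_sub p q, inner_neg_right, ← inner_neg_left,
      ← inner_add_left, ← inner_add_left]
    congr 1
    abel
  simp only [Pi.sub_apply]
  linarith [hp.inner_le_sub hf q, hq.inner_le_sub hg p]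

theorem dist_le (hp : IsProx f y p) (hq : IsProx g x q) (hf : ConvexOn ℝ univ f)
    (hg : ConvexOn ℝ univ g) {K : ℝ≥0} (hfg : LipschitzWith K (f - g)) :
    dist p q ≤ dist y x + K := by
  have hlip : (f - g) q - (f - g) p ≤ K * ‖p - q‖ := by
    rw [← dist_eq_norm, dist_comm]
    exact (Real.sub_le_dist _ _).trans (hfg.dist_le_mul q p)
  have hsq : ‖p - q‖ * ‖p - q‖ ≤ (‖y - x‖ + K) * ‖p - q‖ := calc
    ‖p - q‖ * ‖p - q‖ ≤ ⟪y - x, p - q⟫ + ((f - g) q - (f - g) p) := by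
      simpa only [sq] using hp.norm_sub_sq_le hq hf hg
    _ ≤ ‖y - x‖ * ‖p - q‖ + K * ‖p - q‖ := add_le_add (real_inner_le_norm _ _) hlip
    _ = (‖y - x‖ + K) * ‖p - q‖ := by ring
  rw [dist_eq_norm, dist_eq_norm]
  rcases (norm_nonneg (p - q)).eq_or_lt' with hzero | hpos
  · rw [hzero]
    positivity
  · exact le_of_mul_le_mul_right hsq hpos

theorem dist_le_of_smul {s t : ℝ} (hp : IsProx (s • f) y p) (hq : IsProx (t • f) x q)
    (hs : 0 ≤ s) (ht : 0 ≤ t) (hf : ConvexOn ℝ univ f) {K : ℝ≥0} (hK : LipschitzWith K f) :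
    dist p q ≤ dist y x + K * |s - t| := by
  have hlip : LipschitzWith (‖s - t‖₊ * K) (s • f - t • f) := by
    rw [← sub_smul]
    exact (lipschitzWith_smul (s - t)).comp hK
  refine (hp.dist_le hq (hf.smul hs) (hf.smul ht) hlip).trans_eq ?_
  rw [NNReal.coe_mul, coe_nnnorm, Real.norm_eq_abs, mul_comm]

end IsProx

end Prox

theorem composeProx_succ {E : Type*} {m : ℕ} (Pr : Fin (m + 1) → ℝ → E → E)
    (θ : Fin (m + 1) → ℝ) (y : E) :
    composeProx Pr θ y =
      Pr 0 (θ 0) (composeProx (fun i => Pr i.succ) (fun i => θ i.succ) y) := by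
  simp [composeProx, List.ofFn_succ]

theorem dist_composeProx_le {E : Type*} [PseudoMetricSpace E] {m : ℕ} {Pr : Fin m → ℝ → E → E}
    {θ θ' δ : Fin m → ℝ}
    (hstep : ∀ i x y, dist (Pr i (θ i) x) (Pr i (θ' i) y) ≤ dist x y + δ i) (x y : E) :
    dist (composeProx Pr θ x) (composeProx Pr θ' y) ≤ dist x y + ∑ i, δ i := by
  induction m with
  | zero => simp [composeProx]
  | succ m ih =>
    rw [composeProx_succ, composeProx_succ, Fin.sum_univ_succ]
    have htail := ih fun i => hstep i.succ
    linarith [hstep 0 (composeProx (fun i => Pr i.succ) (fun i => θ i.succ) x)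
      (composeProx (fun i => Pr i.succ) (fun i => θ' i.succ) y)]

theorem sum_norm_le_sqrt_card_mul_norm {𝕜 ι : Type*} [RCLike 𝕜] [Fintype ι]
    (v : EuclideanSpace 𝕜 ι) : ∑ i, ‖v i‖ ≤ √(Fintype.card ι) * ‖v‖ := by
  simpa [EuclideanSpace.norm_eq] using
    Real.sum_mul_le_sqrt_mul_sqrt Finset.univ (fun _ => 1) fun i => ‖v i‖

theorem convexOn_gauge {E : Type*} [AddCommGroup E] [Module ℝ E] {C : Set E} (hC : Convex ℝ C)
    (habs : Absorbent ℝ C) : ConvexOn ℝ Set.univ (gauge C) := by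
  refine ⟨convex_univ, fun x _ y _ a b ha hb _ => ?_⟩
  rw [← gauge_smul_of_nonneg ha, ← gauge_smul_of_nonneg hb]
  exact gauge_add_le hC habs _ _

section LipschitzInParameters

open scoped NNReal

variable {E : Type*} [NormedAddCommGroup E] [InnerProductSpace ℝ E] {m : ℕ} {g : Fin m → E → ℝ}
  {Pr : Fin m → ℝ → E → E}

theorem norm_composeProx_sub_le (hconv : ∀ i, ConvexOn ℝ Set.univ (g i)) {L : ℝ≥0}
    (hlip : ∀ i, LipschitzWith L (g i))
    (hPr : ∀ i, ∀ θ : ℝ, 0 < θ → ∀ y, IsProx (θ • g i) y (Pr i θ y))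
    {θ θ' : EuclideanSpace ℝ (Fin m)} (hθ : ∀ i, 0 < θ i) (hθ' : ∀ i, 0 < θ' i) (y : E) :
    ‖composeProx Pr (fun i => θ i) y - composeProx Pr (fun i => θ' i) y‖ ≤
      √m * L * ‖θ - θ'‖ := by
  have hstep : ∀ i x z,
      dist (Pr i (θ i) x) (Pr i (θ' i) z) ≤ dist x z + L * |θ i - θ' i| := fun i x z =>
    (hPr i _ (hθ i) x).dist_le_of_smul (hPr i _ (hθ' i) z) (hθ i).le (hθ' i).le (hconv i) (hlip i)
  calc ‖composeProx Pr (fun i => θ i) y - composeProx Pr (fun i => θ' i) y‖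
      ≤ ∑ i, L * |θ i - θ' i| := by simpa [dist_eq_norm] using dist_composeProx_le hstep y y
    _ = L * ∑ i, ‖(θ - θ') i‖ := by simp [Finset.mul_sum]
    _ ≤ L * (√m * ‖θ - θ'‖) := by
      gcongr
      simpa using sum_norm_le_sqrt_card_mul_norm (θ - θ')
    _ = √m * L * ‖θ - θ'‖ := by ring

theorem composed_prox_gauge_lipschitz_in_theta_general
    (hconv : ∀ i, ConvexOn ℝ Set.univ (g i)) (hlip : ∀ i, ∃ K : ℝ≥0, LipschitzWith K (g i))
    (hPr : ∀ i, ∀ θ : ℝ, 0 < θ → ∀ y, IsProx (θ • g i) y (Pr i θ y)) :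
    ∃ L : ℝ, 0 < L ∧ ∀ θ θ' : EuclideanSpace ℝ (Fin m),
      (∀ i, 0 < θ i) → (∀ i, 0 < θ' i) → ∀ y : E,
        ‖composeProx Pr (fun i => θ i) y - composeProx Pr (fun i => θ' i) y‖ ≤
          √m * L * ‖θ - θ'‖ := by
  choose K hK using hlip
  have hcommon : ∀ i, LipschitzWith (Finset.univ.sup K + 1) (g i) := fun i =>
    (hK i).weaken ((Finset.le_sup (Finset.mem_univ i)).trans le_self_add)
  exact ⟨(Finset.univ.sup K + 1 : ℝ≥0), by positivity, fun θ θ' hθ hθ' y =>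
    norm_composeProx_sub_le hconv hcommon hPr hθ hθ' y⟩

end LipschitzInParameters

/-- **Lipschitz continuity in the parameters of composed proximal operators of gauges**
(Corollary).  Let `C₁, …, C_m` be compact convex sets containing `0` in their interior,
with gauges `G_i = gauge (C i)`, and let `P_i(θ, ·)` be the proximal operator of `θ G_i`,
i.e. `P_i(θ, y)` minimizes `z ↦ (1/2)‖z - y‖² + θ G_i(z)`.  Then there is `L > 0` such
that for all `θ, θ' ∈ (0,∞)^m` and all `y`,
`‖P₁(θ₁, …, P_m(θ_m, y)…) - P₁(θ'₁, …, P_m(θ'_m, y)…)‖ ≤ √m · L · ‖θ - θ'‖`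
with the Euclidean norm on `ℝ^m`. -/
theorem composed_prox_gauge_lipschitz_in_theta
    {E : Type*} [NormedAddCommGroup E] [InnerProductSpace ℝ E] [FiniteDimensional ℝ E]
    {m : ℕ} (C : Fin m → Set E)
    (hconv : ∀ i, Convex ℝ (C i)) (hcomp : ∀ i, IsCompact (C i))
    (h0 : ∀ i, 0 ∈ interior (C i))
    (Pr : Fin m → ℝ → E → E)
    (hPr : ∀ i : Fin m, ∀ θ : ℝ, 0 < θ → ∀ y z : E,
      (1 / 2) * ‖Pr i θ y - y‖ ^ 2 + θ * gauge (C i) (Pr i θ y)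
        ≤ (1 / 2) * ‖z - y‖ ^ 2 + θ * gauge (C i) z) :
    ∃ L : ℝ, 0 < L ∧ ∀ θ θ' : EuclideanSpace ℝ (Fin m),
      (∀ i, 0 < θ i) → (∀ i, 0 < θ' i) → ∀ y : E,
        ‖composeProx Pr (fun i => θ i) y - composeProx Pr (fun i => θ' i) y‖
          ≤ Real.sqrt m * L * ‖θ - θ'‖ := by
  have hnhds i : C i ∈ nhds (0 : E) := mem_interior_iff_mem_nhds.1 (h0 i)
  exact composed_prox_gauge_lipschitz_in_theta_general
    (fun i => convexOn_gauge (hconv i) (absorbent_nhds_zero (hnhds i)))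
    (fun i => (hconv i).lipschitz_gauge (hnhds i))
    fun i θ hθ y => isMinOn_univ_iff.2 (hPr i θ hθ y)
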